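/- Let π, r ∈ ℤ[ω] with π a prime, π ≡ r ≡ 1 (mod 3), gcd(π,r)=1, and let j ≥ 0 with k = j+1. Then g(rπ^j, π^{j+1}) equals N(π^j) times: −1 if 3 | k; g(r,π) if k ≡ 1 (mod 3); and conj(g(r,π)) if k ≡ 2 (mod 3). -/

import Mathlib

open Complex

noncomputable section

/-- The primitive cube root of unity `ω = e^{2πi/3}`. -/
def ω : ℂ := Complex.exp (2 * Real.pi * Complex.I / 3)

/-- The ring of Eisenstein integers `ℤ[ω]`, as a subring of `ℂ`. -/
def Zω : Subring ℂ := Subring.closure {ω}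

/-- `ω` as an element of `ℤ[ω]`. -/
def ωZ : Zω := ⟨ω, Subring.subset_closure rfl⟩

/-- The ramified prime `λ = 1 - ω` of `ℤ[ω]`. -/
def lamZ : Zω := 1 - ωZ

/-- The norm `N(a) = |a|²` from `ℚ(ω)` to `ℚ`, restricted to `ℤ[ω]`. -/
def Nm (a : Zω) : ℝ := Complex.normSq (a : ℂ)

/-- The norm of an Eisenstein integer, as a natural number. -/
def NmNat (a : Zω) : ℕ := ⌊Complex.normSq (a : ℂ)⌋₊

/-- `e(z) = e^{2πi Tr(z)} = e^{2πi (z + z̄)}`. -/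
def eE (z : ℂ) : ℂ := Complex.exp (2 * Real.pi * Complex.I * (z + (starRingEnd ℂ) z))

/-- `χ` is the cubic residue symbol `χ a b = (a/b)₃` on `ℤ[ω]`:
it is multiplicative in both arguments, and at prime moduli `π` coprime to `3`
it is given by the power-residue congruence
`(a/π)₃ ≡ a^{(N(π)-1)/3} (mod π)`, with values among `{1, ω, ω²}` (and `0` when `π ∣ a`). -/
def IsCubicSymbol (χ : Zω → Zω → Zω) : Prop :=
  (∀ a b₁ b₂ : Zω, χ a (b₁ * b₂) = χ a b₁ * χ a b₂) ∧
  (∀ a₁ a₂ b : Zω, χ (a₁ * a₂) b = χ a₁ b * χ a₂ b) ∧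
  (∀ a : Zω, χ a 1 = 1) ∧
  (∀ a π : Zω, Prime π → IsCoprime π 3 →
    (π ∣ a → χ a π = 0) ∧
    (¬ π ∣ a →
      ((χ a π : ℂ) = 1 ∨ (χ a π : ℂ) = ω ∨ (χ a π : ℂ) = ω ^ 2) ∧
      π ∣ (a ^ ((NmNat π - 1) / 3) - χ a π)))

/-- The shifted cubic Gauss sum `g(ν,c) = Σ_{d mod c} (d/c)₃ e(νd/c)`,
relative to a cubic residue symbol `χ`. -/
def gauss (χ : Zω → Zω → Zω) (ν c : Zω) : ℂ :=
  ∑' q : Zω ⧸ Ideal.span {c},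
    ((χ (Quotient.out q) c : Zω) : ℂ) * eE (((ν * Quotient.out q : Zω) : ℂ) / (c : ℂ))

/-- `μ` is the Möbius function of `ℤ[ω]`. -/
def IsMoebiusZω (μ : Zω → ℤ) : Prop :=
  μ 1 = 1 ∧
  (∀ a : Zω, ¬ Squarefree a → μ a = 0) ∧
  (∀ a b : Zω, IsCoprime a b → μ (a * b) = μ a * μ b) ∧
  (∀ π : Zω, Prime π → μ π = -1)

end

/-!
The `k`-th power of the cubic symbol mod `π` and `e(rd/π)` both depend only on `d mod π`, so the
sum over `ℤ[ω]/(πᵏ)` collapses to `N(πʲ)` times the Gauss sum over `ℤ[ω]/(π)` of the `k`-th power of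
the cubic residue character. That character has cube `1`: its `k`-th power is trivial, itself or
its inverse according to `k mod 3`. A trivial character contributes `-1` because the additive
character is nontrivial, and the inverse one contributes the conjugate sum because a character of
odd order is `1` at `-1`.
-/

section General

theorem card_nsmul_sum_comp_of_surjective {A B M : Type*} [AddGroup A] [AddGroup B]
    [AddCommMonoid M] [Fintype A] [Fintype B] {f : A →+ B} (hf : Function.Surjective f)
    (g : B → M) :
    Fintype.card B • ∑ a, g (f a) = Fintype.card A • ∑ b, g b := by
  classical
  have card_fiber (b : B) : Finset.card {a | f a = b} = Nat.card f.ker := by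
    rw [AddMonoidHom.card_fiber_eq_of_mem_range f (hf b) (hf 0), Nat.card_eq_fintype_card,
      Fintype.card_subtype]
    simp only [AddMonoidHom.mem_ker]
  have sum_comp : ∑ a, g (f a) = Nat.card f.ker • ∑ b, g b := by
    rw [Finset.smul_sum, ← Finset.sum_fiberwise' Finset.univ f g]
    simp only [Finset.sum_const, card_fiber]
  have card_mul : Nat.card f.ker * Fintype.card B = Fintype.card A := by
    simpa [AddSubgroup.index_ker, AddMonoidHom.range_eq_top.mpr hf] using f.ker.card_mul_index
  rw [sum_comp, ← mul_nsmul, card_mul]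

theorem natCard_quotient_span_singleton {S : Type*} [CommRing S] [IsDomain S] [Module.Free ℤ S]
    [Module.Finite ℤ S] {r : S} (hr : r ≠ 0) :
    Nat.card (S ⧸ Ideal.span {r}) = (Algebra.norm ℤ r).natAbs := by
  let b := Module.Free.chooseBasis ℤ S
  let e := b.equiv (Ideal.basisSpanSingleton b hr) (Equiv.refl _)
  have he : ((Ideal.span {r}).restrictScalars ℤ).subtype ∘ₗ AddMonoidHom.toIntLinearMap
      (e : S →+ Ideal.span {r}) = Algebra.lmul ℤ S r := b.ext fun i => by
    change (e (b i) : S) = r * b i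
    simp [e]
  rw [Algebra.norm_apply, ← he]
  exact (Submodule.natAbs_det_equiv ((Ideal.span {r}).restrictScalars ℤ) e).symm

theorem eq_of_pow_eq_one_of_dvd_sub {R : Type*} [CommRing R] [IsDomain R] {n : ℕ} {p u v : R}
    (hp : ¬ p ∣ n) (hu : u ^ n = 1) (hv : v ^ n = 1) (huv : p ∣ u - v) : u = v := by
  by_contra hne
  have hn : n ≠ 0 := by rintro rfl; simp at hp
  have geom_sum : ∑ i ∈ Finset.range n, u ^ i * v ^ (n - 1 - i) = 0 := by
    refine (mul_eq_zero.mp ?_).resolve_right (sub_ne_zero.mpr hne)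
    rw [(Commute.all u v).geom_sum₂_mul, hu, hv, sub_self]
  have hdvd : p ∣ n * v ^ (n - 1) := (dvd_geom_sum₂_iff_of_dvd_sub huv).mp (geom_sum ▸ dvd_zero p)
  have hunit : IsUnit v := .of_pow_eq_one hv hn
  exact hp ((hunit.pow (n - 1)).dvd_mul_right.mp hdvd)

theorem star_gaussSum_of_odd_order {R : Type*} [CommRing R] [Fintype R] {n : ℕ} (hn : Odd n)
    {χ : MulChar R ℂ} (hχ : χ ^ n = 1) (ψ : AddChar R ℂ) :
    star (gaussSum χ ψ) = gaussSum χ⁻¹ ψ := by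
  have hneg : χ (-1) = 1 := MulChar.val_neg_one_eq_one_of_odd_order hn hχ
  rw [star_gaussSum_eq, AddChar.inv_mulShift, ← Units.coe_neg_one, gaussSum_mulShift_eq, inv_inv,
    Units.coe_neg_one, hneg, one_mul]

theorem isUnit_mk_of_not_dvd {R : Type*} [CommRing R] [Ring.HasFiniteQuotients R] {p a : R}
    (hp : Prime p) (ha : ¬ p ∣ a) : IsUnit (Ideal.Quotient.mk (Ideal.span {p}) a) := by
  have : (Ideal.span {p}).IsPrime := (Ideal.span_singleton_prime hp.ne_zero).mpr hp
  have : Finite (R ⧸ Ideal.span {p}) :=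
    Ring.HasFiniteQuotients.finiteQuotient (by simpa using hp.ne_zero)
  rw [isUnit_iff_mem_nonZeroDivisors_of_finite, mem_nonZeroDivisors_iff_ne_zero, Ne,
    Ideal.Quotient.eq_zero_iff_dvd]
  exact ha

theorem not_dvd_of_isCoprime {R : Type*} [CommSemiring R] {p a : R} (hp : Prime p)
    (h : IsCoprime p a) : ¬ p ∣ a := fun hdvd =>
  hp.not_isUnit (h.isUnit_of_dvd hdvd)

theorem isCoprime_of_dvd_sub_one {R : Type*} [CommRing R] {a b : R} (h : b ∣ a - 1) :
    IsCoprime a b := by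
  obtain ⟨t, ht⟩ := h
  exact ⟨1, -t, by linear_combination ht⟩

end General

section Omega

theorem isPrimitiveRoot_omega : IsPrimitiveRoot ω 3 :=
  Complex.isPrimitiveRoot_exp 3 three_ne_zero

theorem omega_sq : ω ^ 2 = -1 - ω := by
  have h : ∑ i ∈ Finset.range 3, ω ^ i = 0 := isPrimitiveRoot_omega.geom_sum_eq_zero (by norm_num)
  simp only [Finset.sum_range_succ, Finset.sum_range_zero, pow_zero, pow_one] at h
  linear_combination h

theorem conj_omega : (starRingEnd ℂ) ω = -1 - ω := by
  have hnorm : ‖ω‖ = 1 := isPrimitiveRoot_omega.norm'_eq_one three_ne_zero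
  calc (starRingEnd ℂ) ω = ω⁻¹ := (Complex.inv_eq_conj hnorm).symm
    _ = ω ^ 2 := inv_eq_of_mul_eq_one_right (by
      rw [← pow_succ', isPrimitiveRoot_omega.pow_eq_one])
    _ = -1 - ω := omega_sq

theorem omega_im_ne_zero : ω.im ≠ 0 := by
  intro him
  have hsq : ω ^ 2 = ω ^ 1 := by
    rw [pow_one, omega_sq, ← conj_omega, Complex.conj_eq_iff_im.mpr him]
  exact absurd (isPrimitiveRoot_omega.pow_inj (by norm_num) (by norm_num) hsq) (by norm_num)

theorem lamZ_dvd_three : lamZ ∣ 3 := by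
  refine ⟨2 + ωZ, Subtype.ext ?_⟩
  change (3 : ℂ) = (1 - ω) * (2 + ω)
  linear_combination omega_sq

end Omega

namespace Zω

theorem exists_coe_eq (a : Zω) : ∃ x y : ℤ, (a : ℂ) = x + y * ω := by
  obtain ⟨a, ha⟩ := a
  induction ha using Subring.closure_induction with
  | mem z hz => exact ⟨0, 1, by simpa using hz⟩
  | zero => exact ⟨0, 0, by simp⟩
  | one => exact ⟨1, 0, by simp⟩
  | add _ _ _ _ ha hb =>
    obtain ⟨x, y, hxy⟩ := ha
    obtain ⟨z, w, hzw⟩ := hb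
    exact ⟨x + z, y + w, by push_cast at *; linear_combination hxy + hzw⟩
  | neg _ _ ha =>
    obtain ⟨x, y, hxy⟩ := ha
    exact ⟨-x, -y, by push_cast at *; linear_combination -hxy⟩
  | mul a b _ _ ha hb =>
    obtain ⟨x, y, rfl : a = x + y * ω⟩ := ha
    obtain ⟨z, w, rfl : b = z + w * ω⟩ := hb
    refine ⟨x * z - y * w, x * w + y * z - y * w, ?_⟩
    push_cast
    linear_combination (y * w : ℂ) * omega_sq

theorem exists_eq (a : Zω) : ∃ x y : ℤ, a = x • 1 + y • ωZ := by
  obtain ⟨x, y, h⟩ := exists_coe_eq a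
  exact ⟨x, y, Subtype.ext (by simpa [ωZ] using h)⟩

theorem linearIndependent_one_omega : LinearIndependent ℤ ![(1 : Zω), ωZ] := by
  refine LinearIndependent.pair_iff.mpr fun x y h => ?_
  have hxy : (x : ℂ) + y * ω = 0 := by simpa [ωZ] using congrArg Subtype.val h
  obtain rfl : y = 0 := by simpa [omega_im_ne_zero] using congrArg Complex.im hxy
  exact ⟨by simpa using hxy, rfl⟩

theorem span_one_omega : ⊤ ≤ Submodule.span ℤ (Set.range ![(1 : Zω), ωZ]) := by
  rintro a -
  obtain ⟨x, y, rfl⟩ := exists_eq a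
  rw [Matrix.range_cons, Matrix.range_cons, Matrix.range_empty, Set.union_empty]
  exact Submodule.mem_span_pair.mpr ⟨x, y, rfl⟩

/-- The `ℤ`-basis `(1, ω)` of `ℤ[ω]`. -/
noncomputable def basis : Module.Basis (Fin 2) ℤ Zω :=
  .mk linearIndependent_one_omega span_one_omega

instance : Module.Free ℤ Zω := .of_basis basis

instance : Module.Finite ℤ Zω := .of_basis basis

theorem basis_repr_add_smul_omega (x y : ℤ) : basis.repr (x • 1 + y • ωZ) = ![x, y] := by
  have h : x • 1 + y • ωZ = x • basis 0 + y • basis 1 := by simp [basis]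
  ext i
  rw [h, map_add, map_smul, map_smul, basis.repr_self, basis.repr_self]
  fin_cases i <;> simp

theorem norm_add_smul_omega (x y : ℤ) :
    Algebra.norm ℤ (x • 1 + y • ωZ : Zω) = x ^ 2 - x * y + y ^ 2 := by
  have hω : (x • 1 + y • ωZ) * ωZ = (-y) • 1 + (x - y) • ωZ := by
    refine Subtype.ext ?_
    simp only [ωZ, zsmul_eq_mul, mul_one]
    push_cast
    linear_combination (y : ℂ) * omega_sq
  have h0 : basis 0 = 1 := by simp [basis]
  have h1 : basis 1 = ωZ := by simp [basis]
  simp only [Algebra.norm_eq_matrix_det basis, Matrix.det_fin_two,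
    Algebra.leftMulMatrix_eq_repr_mul, h0, h1, mul_one, hω, basis_repr_add_smul_omega,
    Matrix.cons_val_zero, Matrix.cons_val_one]
  ring

theorem coe_norm (a : Zω) : (Algebra.norm ℤ a : ℂ) = a * (starRingEnd ℂ) a := by
  obtain ⟨x, y, rfl⟩ := exists_eq a
  rw [norm_add_smul_omega]
  simp only [ωZ, zsmul_eq_mul, mul_one]
  push_cast
  simp only [map_add, map_mul, map_intCast, conj_omega]
  linear_combination (y ^ 2 : ℂ) * omega_sq

end Zω

theorem natCard_quotient_eq_Nm {c : Zω} (hc : c ≠ 0) :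
    (Nat.card (Zω ⧸ Ideal.span {c}) : ℝ) = Nm c := by
  have hnorm : (Algebra.norm ℤ c : ℝ) = Nm c := by
    rw [← Complex.ofReal_inj, Complex.ofReal_intCast, Zω.coe_norm, Complex.mul_conj, Nm]
  rw [natCard_quotient_span_singleton hc, Nat.cast_natAbs, Int.cast_abs, hnorm,
    Nm, abs_of_nonneg (Complex.normSq_nonneg _)]

theorem Nm_mul (a b : Zω) : Nm (a * b) = Nm a * Nm b := by
  simp [Nm]

theorem Nm_ne_zero {c : Zω} (hc : c ≠ 0) : Nm c ≠ 0 := by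
  simpa [Nm] using hc

section AdditiveCharacter

theorem eE_zero : eE 0 = 1 := by simp [eE]

theorem eE_add (z w : ℂ) : eE (z + w) = eE z * eE w := by
  simp only [eE, ← Complex.exp_add, map_add]
  ring_nf

theorem eE_eq_one_iff {z : ℂ} : eE z = 1 ↔ ∃ n : ℤ, z + (starRingEnd ℂ) z = n := by
  simp only [eE, Complex.exp_eq_one_iff, mul_comm (2 * (Real.pi : ℂ) * Complex.I),
    mul_left_inj' Complex.two_pi_I_ne_zero]

theorem eE_coe (a : Zω) : eE a = 1 := by
  obtain ⟨x, y, h⟩ := Zω.exists_coe_eq a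
  refine eE_eq_one_iff.mpr ⟨2 * x - y, ?_⟩
  simp only [h, map_add, map_mul, conj_omega, map_intCast]
  push_cast
  ring

theorem mul_lamZ_mem_of_eE_eq_one {z : ℂ} (h : eE z = 1) (hω : eE (z * ω) = 1) :
    z * (lamZ : ℂ) ∈ Zω := by
  obtain ⟨m, hm⟩ := eE_eq_one_iff.mp h
  obtain ⟨n, hn⟩ := eE_eq_one_iff.mp hω
  rw [map_mul, conj_omega] at hn
  have hz : z * (lamZ : ℂ) = ((-n - (m + n) * ωZ : Zω) : ℂ) := by
    simp only [lamZ, ωZ]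
    push_cast
    linear_combination (-1 - ω) * hn - ω * hm + (z - (starRingEnd ℂ) z) * omega_sq
  exact hz ▸ Subtype.property _

theorem eE_mul_div_eq_of_dvd_sub {c a b : Zω} (r : Zω) (h : c ∣ a - b) :
    eE (((r * a : Zω) : ℂ) / c) = eE (((r * b : Zω) : ℂ) / c) := by
  rcases eq_or_ne c 0 with rfl | hc
  · simp
  obtain ⟨t, ht⟩ := h
  have hc' : (c : ℂ) ≠ 0 := by simpa using hc
  have hab : ((r * a : Zω) : ℂ) / c = ((r * b : Zω) : ℂ) / c + ((r * t : Zω) : ℂ) := by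
    rw [eq_add_of_sub_eq ht]
    push_cast
    field_simp
    ring
  rw [hab, eE_add, eE_coe, mul_one]

/-- The additive character `d ↦ e(rd/c)` of `ℤ[ω]/(c)` against which `gauss` sums the cubic
residue symbol. For `c = 0` it is trivial, since `x / 0 = 0`. -/
noncomputable def residueAddChar (c r : Zω) : AddChar (Zω ⧸ Ideal.span {c}) ℂ where
  toFun := Quotient.lift (fun a : Zω => eE (((r * a : Zω) : ℂ) / c)) fun _ _ h =>
    eE_mul_div_eq_of_dvd_sub r
      (Ideal.mem_span_singleton.mp ((Submodule.quotientRel_def _).mp h))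
  map_zero_eq_one' := by
    change eE (((r * 0 : Zω) : ℂ) / c) = 1
    simp [eE_zero]
  map_add_eq_mul' := by
    rintro ⟨a⟩ ⟨b⟩
    change eE (((r * (a + b) : Zω) : ℂ) / c) = _
    rw [mul_add, Subring.coe_add, add_div, eE_add]

@[simp]
theorem residueAddChar_mk (c r a : Zω) :
    residueAddChar c r (Ideal.Quotient.mk _ a) = eE (((r * a : Zω) : ℂ) / c) :=
  rfl

theorem dvd_mul_lamZ_of_residueAddChar_eq_one {c r : Zω} (hc : c ≠ 0)
    (h : residueAddChar c r = 1) : c ∣ r * lamZ := by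
  have hc' : (c : ℂ) ≠ 0 := by simpa using hc
  have he (a : Zω) : eE (((r * a : Zω) : ℂ) / c) = 1 := by
    rw [← residueAddChar_mk, h, AddChar.one_apply]
  have hmem : (r : ℂ) / c * (lamZ : ℂ) ∈ Zω := by
    refine mul_lamZ_mem_of_eE_eq_one ?_ ?_
    · simpa using he 1
    · simpa [ωZ, div_mul_eq_mul_div] using he ωZ
  refine ⟨⟨_, hmem⟩, Subtype.ext ?_⟩
  simp only [Subring.coe_mul]
  field_simp

theorem residueAddChar_ne_one {π r : Zω} (hπ : Prime π) (hπ3 : ¬ π ∣ 3) (hr : ¬ π ∣ r) :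
    residueAddChar π r ≠ 1 := fun h =>
  (hπ.dvd_or_dvd (dvd_mul_lamZ_of_residueAddChar_eq_one hπ.ne_zero h)).elim hr
    fun hlam => hπ3 (hlam.trans lamZ_dvd_three)

end AdditiveCharacter

namespace IsCubicSymbol

variable {χ : Zω → Zω → Zω}

theorem pow_right (hχ : IsCubicSymbol χ) (a b : Zω) (n : ℕ) : χ a (b ^ n) = χ a b ^ n := by
  induction n with
  | zero => rw [pow_zero, pow_zero, hχ.2.2.1]
  | succ n ih => rw [pow_succ, hχ.1, ih, pow_succ]

variable {π a b : Zω}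

theorem eq_zero_of_dvd (hχ : IsCubicSymbol χ) (hπ : Prime π) (hπ3 : IsCoprime π 3) (ha : π ∣ a) :
    χ a π = 0 :=
  (hχ.2.2.2 a π hπ hπ3).1 ha

theorem pow_three_eq_one (hχ : IsCubicSymbol χ) (hπ : Prime π) (hπ3 : IsCoprime π 3)
    (ha : ¬ π ∣ a) : χ a π ^ 3 = 1 := by
  refine Subtype.ext ?_
  rcases ((hχ.2.2.2 a π hπ hπ3).2 ha).1 with h | h | h
  · simp [h]
  · simp [h, isPrimitiveRoot_omega.pow_eq_one]
  · simp [h, pow_right_comm ω 2 3, isPrimitiveRoot_omega.pow_eq_one]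

theorem one_left (hχ : IsCubicSymbol χ) (hπ : Prime π) (hπ3 : IsCoprime π 3) : χ 1 π = 1 := by
  have hidem : χ 1 π * χ 1 π = χ 1 π := by rw [← hχ.2.1, one_mul]
  have hunit : IsUnit (χ 1 π) :=
    .of_pow_eq_one (hχ.pow_three_eq_one hπ hπ3 hπ.not_dvd_one) three_ne_zero
  exact hunit.mul_eq_left.mp hidem

theorem eq_of_dvd_sub (hχ : IsCubicSymbol χ) (hπ : Prime π) (hπ3 : IsCoprime π 3)
    (hab : π ∣ a - b) : χ a π = χ b π := by
  have hdvd_iff : π ∣ a ↔ π ∣ b := dvd_iff_dvd_of_dvd_sub hab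
  by_cases ha : π ∣ a
  · rw [hχ.eq_zero_of_dvd hπ hπ3 ha, hχ.eq_zero_of_dvd hπ hπ3 (hdvd_iff.mp ha)]
  have hb : ¬ π ∣ b := mt hdvd_iff.mpr ha
  have hdvd : π ∣ χ a π - χ b π := by
    have ha' := ((hχ.2.2.2 a π hπ hπ3).2 ha).2
    have hb' := ((hχ.2.2.2 b π hπ hπ3).2 hb).2
    have hpow := hab.trans (sub_dvd_pow_sub_pow a b ((NmNat π - 1) / 3))
    convert (hpow.sub ha').add hb' using 1
    ring
  exact eq_of_pow_eq_one_of_dvd_sub (n := 3) (by exact_mod_cast not_dvd_of_isCoprime hπ hπ3)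
    (hχ.pow_three_eq_one hπ hπ3 ha) (hχ.pow_three_eq_one hπ hπ3 hb) hdvd

/-- The cubic residue symbol `(·/π)₃`, as a multiplicative character of `ℤ[ω]/(π)`. -/
noncomputable def mulChar (hχ : IsCubicSymbol χ) (hπ : Prime π) (hπ3 : IsCoprime π 3) :
    MulChar (Zω ⧸ Ideal.span {π}) ℂ where
  toFun := Quotient.lift (fun a : Zω => (χ a π : ℂ)) fun _ _ h =>
    congrArg Subtype.val <| hχ.eq_of_dvd_sub hπ hπ3
      (Ideal.mem_span_singleton.mp ((Submodule.quotientRel_def _).mp h))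
  map_one' := congrArg Subtype.val (hχ.one_left hπ hπ3)
  map_mul' := by
    rintro ⟨a⟩ ⟨b⟩
    exact congrArg Subtype.val (hχ.2.1 a b π)
  map_nonunit' := by
    rintro ⟨a⟩ ha
    exact congrArg Subtype.val
      (hχ.eq_zero_of_dvd hπ hπ3 (not_not.mp (mt (isUnit_mk_of_not_dvd hπ) ha)))

@[simp]
theorem mulChar_mk (hχ : IsCubicSymbol χ) (hπ : Prime π) (hπ3 : IsCoprime π 3) (a : Zω) :
    hχ.mulChar hπ hπ3 (Ideal.Quotient.mk _ a) = χ a π :=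
  rfl

theorem mulChar_pow_three (hχ : IsCubicSymbol χ) (hπ : Prime π) (hπ3 : IsCoprime π 3) :
    hχ.mulChar hπ hπ3 ^ 3 = 1 := by
  refine MulChar.ext fun u => ?_
  obtain ⟨a, ha⟩ := Ideal.Quotient.mk_surjective (u : Zω ⧸ Ideal.span {π})
  have hdvd : ¬ π ∣ a := fun h =>
    MulChar.apply_ne_zero_iff.mpr u.isUnit <| show hχ.mulChar hπ hπ3 u = 0 by
      rw [← ha, mulChar_mk, hχ.eq_zero_of_dvd hπ hπ3 h, Subring.coe_zero]
  rw [MulChar.pow_apply_coe, MulChar.one_apply_coe, ← ha, mulChar_mk]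
  exact_mod_cast hχ.pow_three_eq_one hπ hπ3 hdvd

theorem gauss_mul_pow_eq_sum_factor (hχ : IsCubicSymbol χ) (hπ : Prime π) (hπ3 : IsCoprime π 3)
    (r : Zω) {j : ℕ} [Fintype (Zω ⧸ Ideal.span {π ^ (j + 1)})]
    (hle : Ideal.span {π ^ (j + 1)} ≤ Ideal.span {π}) :
    gauss χ (r * π ^ j) (π ^ (j + 1)) =
      ∑ q, (hχ.mulChar hπ hπ3 ^ (j + 1)) (Ideal.Quotient.factor hle q) *
        residueAddChar π r (Ideal.Quotient.factor hle q) := by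
  have hπ0 : (π : ℂ) ≠ 0 := by simpa using hπ.ne_zero
  rw [gauss, tsum_fintype]
  refine Finset.sum_congr rfl fun q _ => ?_
  have hq : Ideal.Quotient.factor hle q = Ideal.Quotient.mk _ (Quotient.out q) := by
    conv_lhs => rw [← Quotient.out_eq q]
    rfl
  rw [hq, MulChar.pow_apply' _ j.succ_ne_zero, mulChar_mk, residueAddChar_mk, hχ.pow_right]
  congr 2
  push_cast
  field_simp
  ring

theorem gauss_mul_pow (hχ : IsCubicSymbol χ) (hπ : Prime π) (hπ3 : IsCoprime π 3)
    [Fintype (Zω ⧸ Ideal.span {π})] (r : Zω) (j : ℕ) :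
    gauss χ (r * π ^ j) (π ^ (j + 1)) =
      Nm (π ^ j) * gaussSum (hχ.mulChar hπ hπ3 ^ (j + 1)) (residueAddChar π r) := by
  have hpow : π ^ (j + 1) ≠ 0 := pow_ne_zero _ hπ.ne_zero
  have : Finite (Zω ⧸ Ideal.span {π ^ (j + 1)}) :=
    Ring.HasFiniteQuotients.finiteQuotient (by simpa using hpow)
  have := Fintype.ofFinite (Zω ⧸ Ideal.span {π ^ (j + 1)})
  have hle : Ideal.span {π ^ (j + 1)} ≤ Ideal.span {π} :=
    Ideal.span_singleton_le_span_singleton.mpr (dvd_pow_self π j.succ_ne_zero)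
  have hfiber := card_nsmul_sum_comp_of_surjective
    (f := (Ideal.Quotient.factor hle).toAddMonoidHom) (Ideal.Quotient.factor_surjective hle)
    (fun q => (hχ.mulChar hπ hπ3 ^ (j + 1)) q * residueAddChar π r q)
  have hcard {c : Zω} (hc : c ≠ 0) [Fintype (Zω ⧸ Ideal.span {c})] :
      (Fintype.card (Zω ⧸ Ideal.span {c}) : ℂ) = Nm c := by
    rw [← natCard_quotient_eq_Nm hc, Nat.card_eq_fintype_card, Complex.ofReal_natCast]
  have hN : (Nm π : ℂ) ≠ 0 := Complex.ofReal_ne_zero.mpr (Nm_ne_zero hπ.ne_zero)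
  simp only [nsmul_eq_mul, hcard hπ.ne_zero, hcard hpow, pow_succ π, Nm_mul,
    Complex.ofReal_mul] at hfiber
  rw [hχ.gauss_mul_pow_eq_sum_factor hπ hπ3 r hle, gaussSum]
  refine mul_left_cancel₀ hN (hfiber.trans ?_)
  ring

theorem gauss_eq_gaussSum (hχ : IsCubicSymbol χ) (hπ : Prime π) (hπ3 : IsCoprime π 3)
    [Fintype (Zω ⧸ Ideal.span {π})] (r : Zω) :
    gauss χ r π = gaussSum (hχ.mulChar hπ hπ3) (residueAddChar π r) := by
  simpa [Nm] using hχ.gauss_mul_pow hπ hπ3 r 0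

end IsCubicSymbol

theorem gaussSum_one_residueAddChar {π r : Zω} [Fintype (Zω ⧸ Ideal.span {π})] (hπ : Prime π)
    (hπ3 : ¬ π ∣ 3) (hr : ¬ π ∣ r) :
    gaussSum (1 : MulChar (Zω ⧸ Ideal.span {π}) ℂ) (residueAddChar π r) = -1 := by
  have : (Ideal.span {π}).IsPrime := (Ideal.span_singleton_prime hπ.ne_zero).mpr hπ
  have : (Ideal.span {π}).IsMaximal :=
    Ring.HasFiniteQuotients.maximalOfPrime (by simpa using hπ.ne_zero)
  let := Ideal.Quotient.field (Ideal.span {π})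
  exact gaussSum_one_left (residueAddChar_ne_one hπ hπ3 hr)

theorem gauss_prime_power_boundary_general {χ : Zω → Zω → Zω} (hχ : IsCubicSymbol χ) {π : Zω}
    (hπ : Prime π) (hπ3 : IsCoprime π 3) (r : Zω) (j : ℕ) :
    (¬ π ∣ r → 3 ∣ j + 1 → gauss χ (r * π ^ j) (π ^ (j + 1)) = (Nm (π ^ j) : ℂ) * (-1)) ∧
    ((j + 1) % 3 = 1 → gauss χ (r * π ^ j) (π ^ (j + 1)) = (Nm (π ^ j) : ℂ) * gauss χ r π) ∧
    ((j + 1) % 3 = 2 →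
      gauss χ (r * π ^ j) (π ^ (j + 1)) = (Nm (π ^ j) : ℂ) * (starRingEnd ℂ) (gauss χ r π)) := by
  have : Finite (Zω ⧸ Ideal.span {π}) :=
    Ring.HasFiniteQuotients.finiteQuotient (by simpa using hπ.ne_zero)
  have := Fintype.ofFinite (Zω ⧸ Ideal.span {π})
  have hcube := hχ.mulChar_pow_three hπ hπ3
  rw [hχ.gauss_mul_pow hπ hπ3, hχ.gauss_eq_gaussSum hπ hπ3, pow_eq_pow_mod (j + 1) hcube]
  refine ⟨fun hr hk => ?_, fun hk => ?_, fun hk => ?_⟩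
  · rw [Nat.mod_eq_zero_of_dvd hk, pow_zero,
      gaussSum_one_residueAddChar hπ (not_dvd_of_isCoprime hπ hπ3) hr]
  · rw [hk, pow_one]
  · have hinv : (hχ.mulChar hπ hπ3)⁻¹ = hχ.mulChar hπ hπ3 ^ 2 :=
      inv_eq_of_mul_eq_one_right (by rw [← pow_succ', hcube])
    rw [hk, ← hinv, starRingEnd_apply, star_gaussSum_of_odd_order (by decide) hcube]

open Complex in
/-- for a prime `π ≡ 1 (mod 3)`, `r ≡ 1 (mod 3)` coprime to `π`,
`j ≥ 0` and `k = j + 1`: `g(rπʲ, πᵏ)` equals `N(πʲ)` times `-1` if `3 ∣ k`,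
`g(r,π)` if `k ≡ 1 (mod 3)`, and `conj(g(r,π))` if `k ≡ 2 (mod 3)`. -/
theorem gauss_prime_power_boundary (χ : Zω → Zω → Zω) (hχ : IsCubicSymbol χ)
    (π r : Zω) (hπ : Prime π) (hπ1 : (3 : Zω) ∣ (π - 1)) (hr : (3 : Zω) ∣ (r - 1))
    (hco : IsCoprime π r) (j : ℕ) :
    (3 ∣ (j + 1) → gauss χ (r * π ^ j) (π ^ (j + 1)) = (Nm (π ^ j) : ℂ) * (-1)) ∧
    ((j + 1) % 3 = 1 → gauss χ (r * π ^ j) (π ^ (j + 1)) = (Nm (π ^ j) : ℂ) * gauss χ r π) ∧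
    ((j + 1) % 3 = 2 →
      gauss χ (r * π ^ j) (π ^ (j + 1)) = (Nm (π ^ j) : ℂ) * (starRingEnd ℂ) (gauss χ r π)) := by
  obtain ⟨h0, h1, h2⟩ :=
    gauss_prime_power_boundary_general hχ hπ (isCoprime_of_dvd_sub_one hπ1) r j
  exact ⟨h0 (not_dvd_of_isCoprime hπ hco), h1, h2⟩
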